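/- Let (Q,·,e) be a loop with left and right nuclear squares. Then Nuc_ℓ(Q) ∩ Nuc_r(Q) is a normal subloop of Q. -/

import Mathlib

/-- A loop `(Q, ·, e)`: a quasigroup with two-sided identity, presented with
explicit left division `ldiv a b = a \ b` and right division `rdiv b a = b / a`. -/
structure LoopStr (Q : Type*) where
  mul : Q → Q → Q
  e : Q
  ldiv : Q → Q → Q
  rdiv : Q → Q → Q
  one_mul : ∀ x, mul e x = x
  mul_one : ∀ x, mul x e = x
  mul_ldiv : ∀ a b, mul a (ldiv a b) = b
  ldiv_mul : ∀ a b, ldiv a (mul a b) = b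
  rdiv_mul : ∀ a b, mul (rdiv b a) a = b
  mul_rdiv : ∀ a b, rdiv (mul b a) a = b

namespace LoopStr

variable {Q : Type*} (S : LoopStr Q)

/-- The left inverse `x^ℓ = e / x`. -/
def linv (x : Q) : Q := S.rdiv S.e x

/-- The right inverse `x^r = x \ e`. -/
def rinv (x : Q) : Q := S.ldiv x S.e

/-- The left nucleus. -/
def lnuc : Set Q := {a | ∀ x y, S.mul (S.mul a x) y = S.mul a (S.mul x y)}

/-- The middle nucleus. -/
def mnuc : Set Q := {a | ∀ x y, S.mul (S.mul x a) y = S.mul x (S.mul a y)}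

/-- The right nucleus. -/
def rnuc : Set Q := {a | ∀ x y, S.mul (S.mul x y) a = S.mul x (S.mul y a)}

/-- The commutant `C(Q)`. -/
def commutant : Set Q := {a | ∀ x, S.mul a x = S.mul x a}

/-- The center `Z(Q) = C(Q) ∩ Nuc_ℓ ∩ Nuc_m ∩ Nuc_r`. -/
def center : Set Q := S.commutant ∩ S.lnuc ∩ S.mnuc ∩ S.rnuc

/-- The left translation `L_a` as a map. -/
def leftMul (a : Q) : Q → Q := fun x => S.mul a x

/-- The left translation `L_a` as a permutation of `Q`. -/
def leftPerm (a : Q) : Equiv.Perm Q :=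
  ⟨fun x => S.mul a x, fun x => S.ldiv a x, S.ldiv_mul a, S.mul_ldiv a⟩

/-- The right translation `R_a` as a permutation of `Q`. -/
def rightPerm (a : Q) : Equiv.Perm Q :=
  ⟨fun x => S.mul x a, fun x => S.rdiv x a, fun x => S.mul_rdiv a x, fun x => S.rdiv_mul a x⟩

/-- The multiplication group `Mlt(Q) = ⟨L_x, R_x : x ∈ Q⟩ ≤ Sym(Q)`. -/
def Mlt : Subgroup (Equiv.Perm Q) :=
  Subgroup.closure (Set.range S.leftPerm ∪ Set.range S.rightPerm)

/-- `x^n = L_x^n(e)` for natural `n`. -/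
def npow (a : Q) (n : ℕ) : Q := (S.leftPerm a ^ n) S.e

/-- `x^n = L_x^n(e)` for integer `n`. -/
def zpow (a : Q) (n : ℤ) : Q := (S.leftPerm a ^ n) S.e

/-- The order of an element: the least `n > 0` with `x^n = e` (or `0` if none exists). -/
noncomputable def lorder (a : Q) : ℕ := sInf {n : ℕ | 0 < n ∧ S.npow a n = S.e}

/-- A subloop: contains `e`, closed under multiplication and both divisions. -/
def IsSubloop (N : Set Q) : Prop :=
  S.e ∈ N ∧ (∀ a ∈ N, ∀ b ∈ N, S.mul a b ∈ N) ∧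
    (∀ a ∈ N, ∀ b ∈ N, S.ldiv a b ∈ N) ∧ (∀ a ∈ N, ∀ b ∈ N, S.rdiv a b ∈ N)

/-- A normal subloop: a subloop with `xN = Nx`, `(xN)y = x(Ny)`, `N(xy) = (Nx)y`
elementwise as sets. -/
def IsNormalSubloop (N : Set Q) : Prop :=
  S.IsSubloop N ∧
  (∀ x : Q, (fun a => S.mul x a) '' N = (fun a => S.mul a x) '' N) ∧
  (∀ x y : Q, (fun a => S.mul (S.mul x a) y) '' N = (fun a => S.mul x (S.mul a y)) '' N) ∧
  (∀ x y : Q, (fun a => S.mul a (S.mul x y)) '' N = (fun a => S.mul (S.mul a x) y) '' N)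

/-- A loop is simple if its only normal subloops are `{e}` and `Q`. -/
def IsSimple : Prop :=
  ∀ N : Set Q, S.IsNormalSubloop N → N = {S.e} ∨ N = Set.univ

lemma mul_rinv (x : Q) : S.mul x (S.rinv x) = S.e := S.mul_ldiv x S.e

lemma linv_mul (x : Q) : S.mul (S.linv x) x = S.e := S.rdiv_mul x S.e

lemma linv_rinv (x : Q) : S.linv (S.rinv x) = x := by
  have h := S.mul_rdiv (S.rinv x) x
  rw [S.mul_rinv] at h
  exact h

lemma rinv_linv (x : Q) : S.rinv (S.linv x) = x := by
  have h := S.ldiv_mul (S.linv x) x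
  rw [S.linv_mul] at h
  exact h

lemma rinv_e : S.rinv S.e = S.e := by
  have h := S.ldiv_mul S.e S.e
  rw [S.one_mul] at h
  exact h

lemma rdiv_e (x : Q) : S.rdiv x S.e = x := by
  have h := S.mul_rdiv S.e x
  rw [S.mul_one] at h
  exact h

/-- The principal right isostrophe `(Q, ∘)` of `(Q, ·)`, with `x ∘ y = x / (y^r)`,
right division `x // y = x·(y^r)` and left division `x \\ y = (y \ x)^ℓ`. -/
def iso : LoopStr Q where
  mul x y := S.rdiv x (S.rinv y)
  e := S.e
  ldiv x y := S.linv (S.ldiv y x)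
  rdiv x y := S.mul x (S.rinv y)
  one_mul x := S.linv_rinv x
  mul_one x := by
    show S.rdiv x (S.rinv S.e) = x
    rw [S.rinv_e, S.rdiv_e]
  mul_ldiv a b := by
    show S.rdiv a (S.rinv (S.linv (S.ldiv b a))) = b
    rw [S.rinv_linv]
    have h := S.mul_rdiv (S.ldiv b a) b
    rw [S.mul_ldiv] at h
    exact h
  ldiv_mul a b := by
    show S.linv (S.ldiv (S.rdiv a (S.rinv b)) a) = b
    have h := S.ldiv_mul (S.rdiv a (S.rinv b)) (S.rinv b)
    rw [S.rdiv_mul] at h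
    rw [h, S.linv_rinv]
  rdiv_mul a b := by
    show S.rdiv (S.mul b (S.rinv a)) (S.rinv a) = b
    exact S.mul_rdiv (S.rinv a) b
  mul_rdiv a b := by
    show S.mul (S.rdiv b (S.rinv a)) (S.rinv a) = b
    exact S.rdiv_mul (S.rinv a) b

end LoopStr

namespace LoopStr

variable {Q : Type*} (S : LoopStr Q)

/-- The opposite loop. -/
def op : LoopStr Q where
  mul x y := S.mul y x
  e := S.e
  ldiv a b := S.rdiv b a
  rdiv b a := S.ldiv a b
  one_mul := S.mul_one
  mul_one := S.one_mul
  mul_ldiv := S.rdiv_mul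
  ldiv_mul := S.mul_rdiv
  rdiv_mul := S.mul_ldiv
  mul_rdiv := S.ldiv_mul

lemma op_lnuc : S.op.lnuc = S.rnuc :=
  Set.ext fun _ => ⟨fun h x y => (h y x).symm, fun h x y => (h y x).symm⟩

lemma op_rnuc : S.op.rnuc = S.lnuc :=
  Set.ext fun _ => ⟨fun h x y => (h y x).symm, fun h x y => (h y x).symm⟩

lemma mul_left_cancel {a b c : Q} (h : S.mul a b = S.mul a c) : b = c := by
  rw [← S.ldiv_mul a b, h, S.ldiv_mul]

lemma mul_right_cancel {a b c : Q} (h : S.mul b a = S.mul c a) : b = c :=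
  S.op.mul_left_cancel h

lemma e_mem_lnuc : S.e ∈ S.lnuc := fun x y => by rw [S.one_mul, S.one_mul]

lemma mul_mem_lnuc {a b : Q} (ha : a ∈ S.lnuc) (hb : b ∈ S.lnuc) : S.mul a b ∈ S.lnuc :=
  fun x y => by rw [ha, ha, hb, ha]

lemma ldiv_mem_lnuc {a b : Q} (ha : a ∈ S.lnuc) (hb : b ∈ S.lnuc) : S.ldiv a b ∈ S.lnuc :=
  fun x y => S.mul_left_cancel (a := a) <| by
    rw [← ha, ← ha, ← ha, S.mul_ldiv, hb]

lemma rdiv_mem_lnuc {a b : Q} (ha : a ∈ S.lnuc) (hb : b ∈ S.lnuc) : S.rdiv b a ∈ S.lnuc := by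
  have rinv_mul : S.mul (S.rinv a) a = S.e := S.mul_left_cancel (a := a) <| by
    rw [← ha, S.mul_rinv, S.one_mul, S.mul_one]
  have rdiv_eq : S.rdiv b a = S.mul b (S.rinv a) := S.mul_right_cancel (a := a) <| by
    rw [S.rdiv_mul, hb, rinv_mul, S.mul_one]
  rw [rdiv_eq]
  exact S.mul_mem_lnuc hb (S.ldiv_mem_lnuc ha S.e_mem_lnuc)

lemma isSubloop_lnuc : S.IsSubloop S.lnuc :=
  ⟨S.e_mem_lnuc, fun _ ha _ hb => S.mul_mem_lnuc ha hb, fun _ ha _ hb => S.ldiv_mem_lnuc ha hb,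
    fun _ hb _ ha => S.rdiv_mem_lnuc ha hb⟩

lemma isSubloop_rnuc : S.IsSubloop S.rnuc := by
  obtain ⟨he, hm, hl, hr⟩ := S.op.isSubloop_lnuc
  rw [op_lnuc] at he hm hl hr
  exact ⟨he, fun a ha b hb => hm b hb a ha, fun a ha b hb => hr b hb a ha,
    fun a ha b hb => hl b hb a ha⟩

variable {S} in
lemma IsSubloop.inter {M N : Set Q} (hM : S.IsSubloop M) (hN : S.IsSubloop N) :
    S.IsSubloop (M ∩ N) :=
  ⟨⟨hM.1, hN.1⟩,
    fun a ha b hb => ⟨hM.2.1 a ha.1 b hb.1, hN.2.1 a ha.2 b hb.2⟩,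
    fun a ha b hb => ⟨hM.2.2.1 a ha.1 b hb.1, hN.2.2.1 a ha.2 b hb.2⟩,
    fun a ha b hb => ⟨hM.2.2.2 a ha.1 b hb.1, hN.2.2.2 a ha.2 b hb.2⟩⟩

lemma isSubloop_lnuc_inter_rnuc : S.IsSubloop (S.lnuc ∩ S.rnuc) :=
  S.isSubloop_lnuc.inter S.isSubloop_rnuc

/-- With left and right nuclear squares, `xN ⊆ Nx` for `N = Nuc_ℓ ∩ Nuc_r`: the element
`(xa)x = (xa)² / a` lies in `N`, and so does `b = ((xa)x) / x²`, which satisfies `bx = xa`. -/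
lemma exists_mul_eq_mul_right (h : ∀ x : Q, S.mul x x ∈ S.lnuc ∩ S.rnuc) (x : Q) {a : Q}
    (ha : a ∈ S.lnuc ∩ S.rnuc) : ∃ b ∈ S.lnuc ∩ S.rnuc, S.mul b x = S.mul x a := by
  obtain ⟨-, -, -, rdiv_mem⟩ := S.isSubloop_lnuc_inter_rnuc
  have hn : S.mul (S.mul x a) x ∈ S.lnuc ∩ S.rnuc := by
    rw [← S.mul_rdiv a (S.mul (S.mul x a) x), ha.2]
    exact rdiv_mem _ (h _) a ha
  have hb := rdiv_mem _ hn _ (h x)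
  exact ⟨_, hb, S.mul_right_cancel (a := x) <| by rw [hb.1, S.rdiv_mul]⟩

lemma exists_mul_eq_mul_left (h : ∀ x : Q, S.mul x x ∈ S.lnuc ∩ S.rnuc) (x : Q) {a : Q}
    (ha : a ∈ S.lnuc ∩ S.rnuc) : ∃ b ∈ S.lnuc ∩ S.rnuc, S.mul x b = S.mul a x := by
  have hop := S.op.exists_mul_eq_mul_right (a := a)
  rw [op_lnuc, op_rnuc, Set.inter_comm] at hop
  exact hop h x ha

end LoopStr

/-- In a loop with left and right nuclear squares,
`Nuc_ℓ(Q) ∩ Nuc_r(Q)` is a normal subloop of `Q`. -/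
theorem lrnuc_normal {Q : Type*} (S : LoopStr Q)
    (h : ∀ x : Q, S.mul x x ∈ S.lnuc ∩ S.rnuc) :
    S.IsNormalSubloop (S.lnuc ∩ S.rnuc) := by
  refine ⟨S.isSubloop_lnuc_inter_rnuc, fun x => ?_, fun x y => ?_, fun x y => ?_⟩
  · apply Set.Subset.antisymm
    · rintro _ ⟨a, ha, rfl⟩
      exact S.exists_mul_eq_mul_right h x ha
    · rintro _ ⟨a, ha, rfl⟩
      exact S.exists_mul_eq_mul_left h x ha
  · apply Set.Subset.antisymm
    · rintro _ ⟨a, ha, rfl⟩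
      obtain ⟨b, hb, hbx⟩ := S.exists_mul_eq_mul_right h x ha
      obtain ⟨c, hc, hcxy⟩ := S.exists_mul_eq_mul_left h (S.mul x y) hb
      obtain ⟨d, hd, hdy⟩ := S.exists_mul_eq_mul_right h y hc
      refine ⟨d, hd, ?_⟩
      beta_reduce
      rw [hdy, ← hc.2, hcxy, ← hb.1, hbx]
    · rintro _ ⟨a, ha, rfl⟩
      obtain ⟨b, hb, hby⟩ := S.exists_mul_eq_mul_left h y ha
      obtain ⟨c, hc, hcxy⟩ := S.exists_mul_eq_mul_right h (S.mul x y) hb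
      obtain ⟨d, hd, hdx⟩ := S.exists_mul_eq_mul_left h x hc
      refine ⟨d, hd, ?_⟩
      beta_reduce
      rw [hdx, hc.1, hcxy, hb.2, hby]
  · exact Set.image_congr fun a ha => (ha.1 x y).symm
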